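/- Assume k is an integral domain. Then the ideal of inertia forms T_𝔪(𝒟) is a prime ideal of C, and consequently 𝔓 = T_𝔪(𝒟) ∩ A is a prime ideal of A. -/

import Mathlib

set_option maxSynthPendingDepth 3

open MvPolynomial

/-- Index type for the coefficient indeterminates `U_{i,α}`, `i ∈ {1,2}`,
`α` an exponent vector in four variables with `|α| = d i`. -/
def CoefIdx (d : Fin 2 → ℕ) : Type :=
  Σ i : Fin 2, {α : Fin 4 →₀ ℕ // (α.sum fun _ e => e) = d i}

/-- The universal ring of coefficients `A = k[U_{i,α}]`. -/
abbrev Aring (k : Type*) [CommRing k] (d : Fin 2 → ℕ) : Type _ :=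
  MvPolynomial (CoefIdx d) k

/-- The polynomial ring `C = A[x₁,x₂,x₃,x₄]`. -/
abbrev Cring (k : Type*) [CommRing k] (d : Fin 2 → ℕ) : Type _ :=
  MvPolynomial (Fin 4) (Aring k d)

/-- The generic homogeneous polynomial `f_i = Σ_{|α| = d i} U_{i,α} x^α` of degree `d i`. -/
noncomputable def genF (k : Type*) [CommRing k] (d : Fin 2 → ℕ) (i : Fin 2) : Cring k d :=
  ∑ α ∈ (Finset.finsuppAntidiag (Finset.univ : Finset (Fin 4)) (d i)).attach,
    monomial α.1 (X (⟨i, ⟨α.1, (Finset.mem_finsuppAntidiag'.mp α.2).1⟩⟩ : CoefIdx d))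

/-- The 2-minors `J_{r,s} = ∂ᵣf₁·∂ₛf₂ − ∂ₛf₁·∂ᵣf₂` of the Jacobian matrix of `(f₁,f₂)`. -/
noncomputable def Jmin (k : Type*) [CommRing k] (d : Fin 2 → ℕ) (r s : Fin 4) : Cring k d :=
  pderiv r (genF k d 0) * pderiv s (genF k d 1) -
    pderiv s (genF k d 0) * pderiv r (genF k d 1)

/-- The ideal `𝒟 = (f₁, f₂) + (J_{r,s} : r < s) ⊂ C`. -/
noncomputable def Dideal (k : Type*) [CommRing k] (d : Fin 2 → ℕ) : Ideal (Cring k d) :=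
  Ideal.span ({genF k d 0, genF k d 1} ∪ {p | ∃ r s : Fin 4, r < s ∧ p = Jmin k d r s})

/-- The maximal graded ideal `𝔪 = (x₁,x₂,x₃,x₄) ⊂ C`. -/
noncomputable def mIdeal (k : Type*) [CommRing k] (d : Fin 2 → ℕ) : Ideal (Cring k d) :=
  Ideal.span (Set.range (X : Fin 4 → Cring k d))

/-!
The variables `x_j` are inverted one at a time. Once `x_j` is a unit, the coefficients of the forms
can be changed so that the `f_i` vanish at `x` and their partial derivatives take any values there
that satisfy Euler's relation `∑ s, x_s ∂_s f_i = 0`. Hence, modulo `𝒟`, the Jacobian matrix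
behaves like the projection to `x^⊥` of a generic matrix `(z_{i,s})` modulo its `2`-minors. Those
minors generate the kernel of the Segre map `z_{i,s} ↦ a_i b_s`, so `𝒟 : x_j^∞` is the kernel of a
homomorphism to a domain in which all `x_r` are nonzero. A prime that contains `𝒟` and no `x_r`
contains each `𝒟 : x_r^∞`, so these ideals all coincide, and `T_𝔪(𝒟)` is their intersection.
-/

noncomputable section

theorem prod_map_eq_of_exchange {ι σ M : Type*} [CommMonoid M] {x : ι × σ → M}
    (hx : ∀ i i' r s, x (i, r) * x (i', s) = x (i, s) * x (i', r)) {s t : Multiset (ι × σ)}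
    (hfst : s.map Prod.fst = t.map Prod.fst) (hsnd : s.map Prod.snd = t.map Prod.snd) :
    (s.map x).prod = (t.map x).prod := by
  induction s using Multiset.induction_on generalizing t with
  | empty =>
    obtain rfl : t = 0 := by simpa [eq_comm] using hfst
    rfl
  | cons p s ih =>
    obtain ⟨i, r⟩ := p
    obtain ⟨r', hir'⟩ : ∃ r', (i, r') ∈ t := by
      have : i ∈ t.map Prod.fst := by simp [← hfst]
      simpa using this
    obtain ⟨t, rfl⟩ := Multiset.exists_cons_of_mem hir'
    rw [Multiset.map_cons, Multiset.map_cons] at hfst hsnd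
    have hfst' := (Multiset.cons_inj_right i).mp hfst
    by_cases hr : r = r'
    · subst hr
      simp [ih hfst' ((Multiset.cons_inj_right r).mp hsnd)]
    obtain ⟨i', hi'r⟩ : ∃ i', (i', r) ∈ t := by
      have : r ∈ r' ::ₘ t.map Prod.snd := hsnd ▸ Multiset.mem_cons_self _ _
      simpa [hr] using this
    obtain ⟨t, rfl⟩ := Multiset.exists_cons_of_mem hi'r
    rw [Multiset.map_cons, Multiset.cons_swap, Multiset.cons_inj_right] at hsnd
    rw [Multiset.map_cons, Multiset.prod_cons, ih (t := (i', r') ::ₘ t) (by simpa using hfst')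
      (by simpa using hsnd)]
    simp only [Multiset.map_cons, Multiset.prod_cons, ← mul_assoc, hx i i' r r']

section Segre

variable {ι σ R S : Type*} [CommRing R] [CommRing S]

/-- The ideal generated by the `2 × 2` minors of a matrix. Repeated rows and columns are allowed;
they only contribute the generator `0`. -/
def twoMinors (a : Matrix ι σ R) : Ideal R :=
  Ideal.span {p | ∃ i i' r s, p = a i r * a i' s - a i s * a i' r}

theorem twoMinors_le_ker_iff {F : Type*} [FunLike F R S] [RingHomClass F R S]
    {a : Matrix ι σ R} {φ : F} :
    twoMinors a ≤ RingHom.ker φ ↔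
      ∀ i i' r s, φ (a i r) * φ (a i' s) = φ (a i s) * φ (a i' r) := by
  rw [twoMinors, Ideal.span_le]
  constructor
  · intro h i i' r s
    simpa [sub_eq_zero] using h ⟨i, i', r, s, rfl⟩
  · rintro h _ ⟨i, i', r, s, rfl⟩
    simp [h i i' r s]

theorem twoMinors_fin_two [LinearOrder σ] (a : Matrix (Fin 2) σ R) :
    twoMinors a = Ideal.span {p | ∃ r s, r < s ∧ p = a 0 r * a 1 s - a 0 s * a 1 r} := by
  apply le_antisymm
  · set I := Ideal.span {p | ∃ r s, r < s ∧ p = a 0 r * a 1 s - a 0 s * a 1 r}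
    have hlt {r s} (h : r < s) : a 0 r * a 1 s - a 0 s * a 1 r ∈ I :=
      Ideal.subset_span ⟨r, s, h, rfl⟩
    have hall (r s) : a 0 r * a 1 s - a 0 s * a 1 r ∈ I := by
      rcases lt_trichotomy r s with h | rfl | h
      · exact hlt h
      · simp
      · simpa using I.neg_mem (hlt h)
    rw [twoMinors, Ideal.span_le]
    rintro _ ⟨i, i', r, s, rfl⟩
    fin_cases i <;> fin_cases i'
    · simp [mul_comm]
    · exact hall r s
    · simpa [mul_comm] using hall s r
    · simp [mul_comm]
  · refine Ideal.span_mono ?_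
    rintro _ ⟨r, s, -, rfl⟩
    exact ⟨0, 1, r, s, rfl⟩

variable (ι σ R) in
/-- The matrix of indeterminates `z_{i,r}`. -/
def genericMatrix : Matrix ι σ (MvPolynomial (ι × σ) R) :=
  Matrix.of fun i r => X (i, r)

variable (ι σ R) in
/-- The Segre homomorphism `z_{i,r} ↦ a_i b_r`, whose target is the polynomial ring in the
`a_i` (indexed by `Sum.inl`) and the `b_r` (indexed by `Sum.inr`). -/
def segre : MvPolynomial (ι × σ) R →ₐ[R] MvPolynomial (ι ⊕ σ) R :=
  aeval fun q => X (Sum.inl q.1) * X (Sum.inr q.2)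

theorem segre_comp_genericMatrix (i : ι) :
    segre ι σ R ∘ genericMatrix ι σ R i =
      (X (Sum.inl i) : MvPolynomial (ι ⊕ σ) R) • fun r => X (Sum.inr r) := by
  ext1 r
  simp [segre, genericMatrix]

theorem segre_monomial (m : ι × σ →₀ ℕ) :
    segre ι σ R (monomial m 1) =
      monomial ((m.mapDomain Prod.fst).sumElim (m.mapDomain Prod.snd)) 1 := by
  have hmonomial (f : ι × σ → ι ⊕ σ) :
      (monomial (m.mapDomain f) 1 : MvPolynomial (ι ⊕ σ) R) = m.prod fun q n => X (f q) ^ n := by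
    simp [monomial_eq, Finsupp.prod_mapDomain_index, pow_add]
  rw [Finsupp.sumElim_eq_add, ← Finsupp.mapDomain_comp, ← Finsupp.mapDomain_comp, ← one_mul (1 : R),
    ← monomial_mul, hmonomial, hmonomial, one_mul, segre, aeval_monomial, map_one, one_mul]
  simp [mul_pow]

theorem map_monomial_one {τ F : Type*} [FunLike F (MvPolynomial τ R) S]
    [MonoidHomClass F (MvPolynomial τ R) S] (φ : F) (m : τ →₀ ℕ) :
    φ (monomial m 1) = (m.toMultiset.map fun q => φ (X q)).prod := by
  rw [monomial_eq, C_1, one_mul, map_finsuppProd, Finsupp.toMultiset_map, Finsupp.prod_toMultiset,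
    Finsupp.prod_mapDomain_index (by simp) (by simp [pow_add])]
  simp

theorem ker_le_ker_of_factorsThrough {κ κ' V V' N : Type*} [AddCommGroup V] [AddCommGroup V']
    [AddCommGroup N] [Module R V] [Module R V'] [Module R N] (b : Module.Basis κ R V)
    (b' : Module.Basis κ' R V') {φ : V →ₗ[R] V'} {ψ : V →ₗ[R] N} {e : κ → κ'}
    (hφ : ∀ m, φ (b m) = b' (e m)) (hψ : (ψ ∘ b).FactorsThrough e) :
    LinearMap.ker φ ≤ LinearMap.ker ψ := by
  have hfactor : b'.constr R (Function.extend e (ψ ∘ b) 0) ∘ₗ φ = ψ :=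
    b.ext fun m => by simp [hφ, hψ.extend_apply]
  exact hfactor ▸ LinearMap.ker_le_ker_comp φ _

theorem ker_segre : RingHom.ker (segre ι σ R) = twoMinors (genericMatrix ι σ R) := by
  apply le_antisymm
  · set I := twoMinors (genericMatrix ι σ R)
    have hexchange : I ≤ RingHom.ker (Ideal.Quotient.mkₐ R I) := (Ideal.Quotient.mkₐ_ker R I).ge
    have hker := ker_le_ker_of_factorsThrough (basisMonomials (ι × σ) R)
      (basisMonomials (ι ⊕ σ) R) (φ := (segre ι σ R).toLinearMap)
      (ψ := (Ideal.Quotient.mkₐ R I).toLinearMap) (by simpa using segre_monomial) ?_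
    · intro p hp
      exact Ideal.Quotient.eq_zero_iff_mem.mp (hker hp)
    · intro m m' h
      have hfst : m.mapDomain Prod.fst = m'.mapDomain Prod.fst := by
        ext i
        simpa using DFunLike.congr_fun h (Sum.inl i)
      have hsnd : m.mapDomain Prod.snd = m'.mapDomain Prod.snd := by
        ext r
        simpa using DFunLike.congr_fun h (Sum.inr r)
      simp only [Function.comp_apply, coe_basisMonomials, AlgHom.toLinearMap_apply,
        map_monomial_one]
      refine prod_map_eq_of_exchange (twoMinors_le_ker_iff.mp hexchange) ?_ ?_
      · rw [Finsupp.toMultiset_map, Finsupp.toMultiset_map, hfst]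
      · rw [Finsupp.toMultiset_map, Finsupp.toMultiset_map, hsnd]
  · rw [twoMinors_le_ker_iff]
    intro i i' r s
    simp only [genericMatrix, Matrix.of_apply, segre, aeval_X]
    ring

end Segre

section GenericForm

variable {ι σ k W : Type*} [CommRing k] [CommRing W] {d : ι → ℕ}

variable (σ) in
/-- The index type of the coefficients of a family of forms of degrees `d` in the variables `σ`. -/
abbrev GenericCoeff (d : ι → ℕ) : Type _ := Σ i, {α : σ →₀ ℕ // α.degree = d i}

variable (σ k) in
/-- The polynomial ring in the variables `σ` over the ring of universal coefficients. -/
abbrev GenericRing (d : ι → ℕ) : Type _ := MvPolynomial σ (MvPolynomial (GenericCoeff σ d) k)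

/-- The ring homomorphism from the ring of universal coefficients sending each coefficient of a
generic form to the corresponding coefficient of the form `g i`. -/
def specialize (φ : k →+* W) (g : ι → MvPolynomial σ W) :
    MvPolynomial (GenericCoeff σ d) k →+* W :=
  eval₂Hom φ fun u => coeff u.2.1 (g u.1)

variable [Fintype σ] [DecidableEq σ]

variable (σ k d) in
/-- The form of degree `d i` whose coefficients are pairwise distinct indeterminates. -/
def genericForm (i : ι) : GenericRing σ k d :=
  ∑ α ∈ (Finset.univ.finsuppAntidiag (d i)).attach,
    monomial α.1 (X ⟨i, α.1, (Finset.mem_finsuppAntidiag'.mp α.2).1⟩)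

theorem genericForm_isHomogeneous (i : ι) : (genericForm σ k d i).IsHomogeneous (d i) :=
  IsHomogeneous.sum _ _ _ fun α _ =>
    isHomogeneous_monomial _ (Finset.mem_finsuppAntidiag'.mp α.2).1

theorem coeff_genericForm {i : ι} {α : σ →₀ ℕ} (hα : α.degree = d i) :
    coeff α (genericForm σ k d i) = X ⟨i, α, hα⟩ := by
  have hmem : α ∈ Finset.univ.finsuppAntidiag (d i) :=
    Finset.mem_finsuppAntidiag'.mpr ⟨hα, Finset.subset_univ _⟩
  rw [genericForm, coeff_sum, Finset.sum_eq_single ⟨α, hmem⟩]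
  · simp
  · intro β _ hβ
    rw [coeff_monomial, if_neg fun h => hβ (Subtype.ext h)]
  · simp

theorem map_specialize_genericForm (φ : k →+* W) {g : ι → MvPolynomial σ W}
    (hg : ∀ i, (g i).IsHomogeneous (d i)) (i : ι) :
    map (specialize φ g) (genericForm σ k d i) = g i := by
  ext α
  by_cases hα : α.degree = d i
  · simp [coeff_map, coeff_genericForm hα, specialize]
  · rw [(hg i).coeff_eq_zero hα, ((genericForm_isHomogeneous i).map _).coeff_eq_zero hα]

theorem coeffRingHom_ext {φ ψ : MvPolynomial (GenericCoeff σ d) k →+* W}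
    (hC : ∀ a, φ (C a) = ψ (C a))
    (hform : ∀ i, map φ (genericForm σ k d i) = map ψ (genericForm σ k d i)) : φ = ψ := by
  refine ringHom_ext hC ?_
  rintro ⟨i, α, hα⟩
  simpa [coeff_map, coeff_genericForm hα] using congr(coeff α $(hform i))

end GenericForm

section Jet

variable {σ V W : Type*} [Fintype σ] [CommRing V] [CommRing W]

theorem sum_mul_eval_pderiv {n : ℕ} {g : MvPolynomial σ W} (hg : g.IsHomogeneous n) (x : σ → W) :
    ∑ s, x s * eval x (pderiv s g) = n * eval x g := by
  simpa using congr(eval x $(hg.sum_X_mul_pderiv))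

theorem eval_pderiv_eq_of_forall_ne {n : ℕ} {g : MvPolynomial σ W} (hg : g.IsHomogeneous n)
    {x δ : σ → W} {j : σ} (hx : IsUnit (x j)) (hδ : ∑ s, x s * δ s = n * eval x g)
    (hne : ∀ s ≠ j, eval x (pderiv s g) = δ s) (s : σ) : eval x (pderiv s g) = δ s := by
  classical
  rcases eq_or_ne s j with rfl | hs
  · have hsum := (sum_mul_eval_pderiv hg x).trans hδ.symm
    rw [← Finset.add_sum_erase _ _ (Finset.mem_univ s),
      ← Finset.add_sum_erase _ _ (Finset.mem_univ s),
      Finset.sum_congr rfl fun r hr => by rw [hne r (Finset.ne_of_mem_erase hr)]] at hsum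
    exact hx.mul_left_cancel (add_right_cancel hsum)
  · exact hne s hs

theorem exists_isHomogeneous_jet {x : σ → W} {j : σ} (hx : IsUnit (x j)) {n : ℕ} (hn : 0 < n)
    {e : W} {δ : σ → W} (hδ : ∑ s, x s * δ s = n * e) :
    ∃ h : MvPolynomial σ W, h.IsHomogeneous n ∧ eval x h = e ∧ (∀ s, eval x (pderiv s h) = δ s) ∧
      h ∈ Ideal.span (C '' insert e (Set.range δ)) := by
  classical
  obtain ⟨m, rfl⟩ : ∃ m, n = m + 1 := ⟨n - 1, by omega⟩
  obtain ⟨y, hy⟩ := hx.exists_right_inv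
  have hym : x j ^ m * y ^ m = 1 := by rw [← mul_pow, hy, one_pow]
  -- The `j`-th coefficient makes `ℓ x = e`; Euler's identity then controls the `j`-th derivative.
  let ℓ : MvPolynomial σ W := ∑ s, C (δ s) * X s - C e * (C (m * y) * X j)
  have hℓ_eval : eval x ℓ = e := by
    simp only [ℓ, map_sub, map_sum, map_mul, eval_C, eval_X, mul_comm (δ _), hδ]
    push_cast
    linear_combination -(m * e) * hy
  let h := C (y ^ m) * X j ^ m * ℓ
  have hh_homog : h.IsHomogeneous (m + 1) := by
    have hℓ_homog : ℓ.IsHomogeneous 1 :=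
      (IsHomogeneous.sum _ _ _ fun s _ => isHomogeneous_C_mul_X _ s).sub
        ((isHomogeneous_C_mul_X _ j).C_mul _)
    simpa using (isHomogeneous_C_mul_X_pow _ j m).mul hℓ_homog
  have hh_eval : eval x h = e := by
    simp [h, hℓ_eval, mul_comm (y ^ m), hym]
  have hh_pderiv {s} (hs : s ≠ j) : eval x (pderiv s h) = δ s := by
    simp [h, ℓ, pderiv_X, Pi.single_apply, hs.symm, apply_ite, mul_comm (y ^ m), hym]
  refine ⟨h, hh_homog, hh_eval,
    eval_pderiv_eq_of_forall_ne hh_homog hx (hh_eval.symm ▸ hδ) fun s => hh_pderiv, ?_⟩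
  have hC {c : W} (hc : c ∈ insert e (Set.range δ)) (p : MvPolynomial σ W) :
      C c * p ∈ Ideal.span (C '' insert e (Set.range δ)) :=
    Ideal.mul_mem_right _ _ (Ideal.subset_span ⟨c, hc, rfl⟩)
  exact Ideal.mul_mem_left _ _ <|
    sub_mem (sum_mem fun s _ => hC (.inr ⟨s, rfl⟩) _) (hC (.inl rfl) _)

theorem exists_isHomogeneous_eval_pderiv_eq {x : σ → W} {j : σ} (hx : IsUnit (x j)) {n : ℕ}
    (hn : 0 < n) {g : MvPolynomial σ W} (hg : g.IsHomogeneous n) {ω : σ → W}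
    (hω : ∑ s, x s * ω s = 0) {η : W →+* V} (hηg : η (eval x g) = 0)
    (hηω : ∀ s, η (ω s) = η (eval x (pderiv s g))) :
    ∃ g' : MvPolynomial σ W, g'.IsHomogeneous n ∧ eval x g' = 0 ∧
      (∀ s, eval x (pderiv s g') = ω s) ∧ map η g' = map η g := by
  obtain ⟨h, hh, hh_eval, hh_pderiv, hh_mem⟩ := exists_isHomogeneous_jet hx hn
    (e := - eval x g) (δ := fun s => ω s - eval x (pderiv s g))
    (by simp [mul_sub, hω, sum_mul_eval_pderiv hg])
  refine ⟨g + h, hg.add hh, by simp [hh_eval], by simp [hh_pderiv], ?_⟩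
  have hker : Ideal.span (C '' insert (- eval x g) (Set.range fun s => ω s - eval x (pderiv s g))) ≤
      RingHom.ker (map η : MvPolynomial σ W →+* MvPolynomial σ V) := by
    rw [Ideal.span_le]
    rintro _ ⟨_, rfl | ⟨s, rfl⟩, rfl⟩ <;> simp [hηg, hηω]
  rw [map_add, RingHom.mem_ker.mp (hker hh_mem), add_zero]

end Jet

section RingHom

variable {ι σ k V W : Type*} [Fintype σ] [DecidableEq σ] [CommRing k] [CommRing V] [CommRing W]
  {d : ι → ℕ}

theorem exists_ringHom_pderiv_genericForm_eq (hd : ∀ i, 0 < d i) {γ : GenericRing σ k d →+* W}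
    {j : σ} (hj : IsUnit (γ (X j))) {ω : Matrix ι σ W} (hω : ∀ i, ∑ s, γ (X s) * ω i s = 0)
    {η : W →+* V} (hηf : ∀ i, η (γ (genericForm σ k d i)) = 0)
    (hηω : ∀ i s, η (ω i s) = η (γ (pderiv s (genericForm σ k d i)))) :
    ∃ θ : GenericRing σ k d →+* W, (∀ s, θ (X s) = γ (X s)) ∧
      (∀ i, θ (genericForm σ k d i) = 0) ∧ (∀ i s, θ (pderiv s (genericForm σ k d i)) = ω i s) ∧
      η.comp θ = η.comp γ := by
  let x : σ → W := fun s => γ (X s)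
  have hγ p : γ p = eval x (map (γ.comp C) p) := by
    rw [← eval₂_eq_eval_map]
    exact congr($(ringHom_ext (f := γ) (g := eval₂Hom (γ.comp C) x) (by simp) (by simp [x])) p)
  have hγ_pderiv i s : γ (pderiv s (genericForm σ k d i)) =
      eval x (pderiv s (map (γ.comp C) (genericForm σ k d i))) := by rw [hγ, pderiv_map]
  choose g' hg'_homog hg'_eval hg'_pderiv hg'_map using fun i =>
    exists_isHomogeneous_eval_pderiv_eq (x := x) hj (hd i)
      ((genericForm_isHomogeneous i).map (γ.comp C)) (hω i) (hγ _ ▸ hηf i)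
      (fun s => hγ_pderiv i s ▸ hηω i s)
  let φ : MvPolynomial (GenericCoeff σ d) k →+* W := specialize (γ.comp (C.comp C)) g'
  have hφ i : map φ (genericForm σ k d i) = g' i := map_specialize_genericForm _ hg'_homog i
  have hηφ : η.comp φ = η.comp (γ.comp C) := by
    refine coeffRingHom_ext (by simp [φ, specialize]) fun i => ?_
    rw [← map_map, hφ, hg'_map, map_map]
  refine ⟨eval₂Hom φ x, by simp [x], fun i => ?_, fun i s => ?_, ?_⟩
  · rw [coe_eval₂Hom, eval₂_eq_eval_map, hφ, hg'_eval]
  · rw [coe_eval₂Hom, eval₂_eq_eval_map, ← pderiv_map, hφ, hg'_pderiv]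
  · refine ringHom_ext (fun a => ?_) (by simp [x])
    simpa using congr($hηφ a)

end RingHom

section InertiaForms

variable {κ R : Type*} [CommRing R] {D : Ideal R}

/-- The ideal `T_m(D)` of inertia forms of `D` with respect to `m`, also known as the saturation
`D : m^∞`. -/
def inertiaForms (m D : Ideal R) : Ideal R where
  carrier := {p | ∃ ν : ℕ, ∀ q ∈ m ^ ν, q * p ∈ D}
  zero_mem' := ⟨0, by simp⟩
  add_mem' := by
    rintro p p' ⟨ν, hν⟩ ⟨ν', hν'⟩
    refine ⟨max ν ν', fun q hq => ?_⟩
    rw [mul_add]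
    exact D.add_mem (hν q (Ideal.pow_le_pow_right (le_max_left _ _) hq))
      (hν' q (Ideal.pow_le_pow_right (le_max_right _ _) hq))
  smul_mem' := by
    rintro c p ⟨ν, hν⟩
    exact ⟨ν, fun q hq => by simpa [mul_left_comm] using D.mul_mem_left c (hν q hq)⟩

theorem mem_inertiaForms_iff_le_radical {m : Ideal R} (hm : m.FG) {p : R} :
    p ∈ inertiaForms m D ↔ m ≤ (Submodule.colon D {p}).radical := by
  have hpow : p ∈ inertiaForms m D ↔ ∃ ν, m ^ ν ≤ Submodule.colon D {p} := by
    simp [inertiaForms, SetLike.le_def, Submodule.mem_colon_singleton]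
  rw [hpow]
  exact ⟨fun ⟨_, hν⟩ _ hx => ⟨_, hν (Ideal.pow_mem_pow hx _)⟩,
    fun h => Ideal.exists_pow_le_of_le_radical_of_fg h hm⟩

theorem mem_inertiaForms_span_singleton {x p : R} :
    p ∈ inertiaForms (Ideal.span {x}) D ↔ ∃ n : ℕ, x ^ n * p ∈ D := by
  rw [mem_inertiaForms_iff_le_radical (Submodule.fg_span (Set.finite_singleton x)),
    Ideal.span_singleton_le_iff_mem]
  simp [Ideal.mem_radical_iff, Submodule.mem_colon_singleton]

theorem inertiaForms_span_range [Finite κ] (x : κ → R) :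
    inertiaForms (Ideal.span (Set.range x)) D = ⨅ j, inertiaForms (Ideal.span {x j}) D := by
  ext p
  have hsingle (j) := mem_inertiaForms_iff_le_radical (D := D) (p := p)
    (Submodule.fg_span (Set.finite_singleton (x j)))
  simp_rw [Ideal.mem_iInf, hsingle, Ideal.span_singleton_le_iff_mem]
  rw [mem_inertiaForms_iff_le_radical (Submodule.fg_span (Set.finite_range x)), Ideal.span_le,
    Set.range_subset_iff]
  rfl

theorem inertiaForms_span_range_isPrime [Finite κ] [Nonempty κ] {x : κ → R}
    (hprime : ∀ j, (inertiaForms (Ideal.span {x j}) D).IsPrime)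
    (hx : ∀ j r, x r ∉ inertiaForms (Ideal.span {x j}) D) :
    (inertiaForms (Ideal.span (Set.range x)) D).IsPrime := by
  have hle j j' : inertiaForms (Ideal.span {x j}) D ≤ inertiaForms (Ideal.span {x j'}) D := by
    intro p hp
    obtain ⟨n, hn⟩ := mem_inertiaForms_span_singleton.mp hp
    have hn' : x j ^ n * p ∈ inertiaForms (Ideal.span {x j'}) D :=
      mem_inertiaForms_span_singleton.mpr ⟨0, by simpa using hn⟩
    exact ((hprime j').mem_or_mem hn').resolve_left fun h =>
      hx j' j ((hprime j').mem_of_pow_mem n h)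
  obtain ⟨j⟩ := ‹Nonempty κ›
  rw [inertiaForms_span_range, (iInf_le _ j).antisymm (le_iInf (hle j))]
  exact hprime j

end InertiaForms

section EulerProjection

variable {σ W V : Type*} [Fintype σ] [DecidableEq σ] [CommRing W] [CommRing V]
  {x : σ → W} {j : σ} {y : W}

/-- If `x j * y = 1`, the projection of `σ → W` along the `j`-th axis onto the vectors satisfying
the Euler relation `∑ s, x s * b s = 0`. -/
def eulerProj (x : σ → W) (j : σ) (y : W) (b : σ → W) : σ → W :=
  b - Pi.single j (y * x ⬝ᵥ b)

theorem dotProduct_eulerProj (hy : x j * y = 1) (b : σ → W) : x ⬝ᵥ eulerProj x j y b = 0 := by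
  rw [eulerProj, dotProduct_sub, dotProduct_single, ← mul_assoc, hy, one_mul, sub_self]

theorem eulerProj_eq_self {b : σ → W} (hb : x ⬝ᵥ b = 0) : eulerProj x j y b = b := by
  simp [eulerProj, hb]

theorem eulerProj_smul (a : W) (b : σ → W) :
    eulerProj x j y (a • b) = a • eulerProj x j y b := by
  simp [eulerProj, smul_sub, mul_left_comm, ← Pi.single_smul]

theorem map_comp_eulerProj (φ : W →+* V) (b : σ → W) :
    φ ∘ eulerProj x j y b = eulerProj (φ ∘ x) j (φ y) (φ ∘ b) := by
  ext s
  simp [eulerProj, Pi.single_apply, apply_ite φ, RingHom.map_dotProduct]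

end EulerProjection

section JacobianIdeal

variable {ι σ k L : Type*} [Fintype σ] [DecidableEq σ] [CommRing k] [CommRing L] {d : ι → ℕ}

variable (σ k d) in
/-- The Jacobian matrix of the generic forms of degrees `d`. -/
def genericJacobian : Matrix ι σ (GenericRing σ k d) :=
  Matrix.of fun i s => pderiv s (genericForm σ k d i)

variable (σ k d) in
/-- The ideal generated by the generic forms of degrees `d` and the `2`-minors of their Jacobian
matrix. -/
def jacobianIdeal : Ideal (GenericRing σ k d) :=
  Ideal.span (Set.range (genericForm σ k d)) ⊔ twoMinors (genericJacobian σ k d)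

theorem jacobianIdeal_le_ker_iff {φ : GenericRing σ k d →+* L} :
    jacobianIdeal σ k d ≤ RingHom.ker φ ↔ (∀ i, φ (genericForm σ k d i) = 0) ∧
      ∀ i i' r s, φ (genericJacobian σ k d i r) * φ (genericJacobian σ k d i' s) =
        φ (genericJacobian σ k d i s) * φ (genericJacobian σ k d i' r) := by
  rw [jacobianIdeal, sup_le_iff, twoMinors_le_ker_iff, Ideal.span_le, Set.range_subset_iff]
  rfl

theorem dotProduct_genericJacobian (i : ι) :
    X ⬝ᵥ genericJacobian σ k d i = d i * genericForm σ k d i := by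
  rw [← nsmul_eq_mul]
  exact (genericForm_isHomogeneous i).sum_X_mul_pderiv

theorem exists_ringHom_genericJacobian_eq (hd : ∀ i, 0 < d i) {α : GenericRing σ k d →+* L}
    {j : σ} {y : L} (hy : α (X j) * y = 1) :
    ∃ θ : GenericRing σ k d →+* MvPolynomial (ι × σ) L,
      (∀ s, θ (X s) = C (α (X s))) ∧ (∀ i, θ (genericForm σ k d i) = 0) ∧
      (∀ i, θ ∘ genericJacobian σ k d i =
        eulerProj (fun s => C (α (X s))) j (C y) (genericMatrix ι σ L i)) ∧
      (twoMinors (genericMatrix ι σ L)).comap θ ≤ ((jacobianIdeal σ k d).map α).comap α := by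
  let I := (jacobianIdeal σ k d).map α
  let γ : GenericRing σ k d →+* MvPolynomial (ι × σ) L := C.comp α
  let can : GenericRing σ k d →+* L ⧸ I := (Ideal.Quotient.mk I).comp α
  let η : MvPolynomial (ι × σ) L →+* L ⧸ I :=
    eval₂Hom (Ideal.Quotient.mk I) fun q => can (genericJacobian σ k d q.1 q.2)
  have hcan : jacobianIdeal σ k d ≤ RingHom.ker can := fun p hp =>
    Ideal.Quotient.eq_zero_iff_mem.mpr (Ideal.mem_map_of_mem α hp)
  obtain ⟨hcan_form, hcan_minors⟩ := jacobianIdeal_le_ker_iff.mp hcan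
  have hηγ (p) : η (γ p) = can p := by simp [η, γ, can]
  have hyγ : γ (X j) * C y = 1 := by simp [γ, ← C_mul, hy]
  have hη_proj (i) : η ∘ eulerProj (γ ∘ X) j (C y) (genericMatrix ι σ L i) =
      can ∘ genericJacobian σ k d i := by
    have hηX : η ∘ γ ∘ X = can ∘ X := funext fun s => hηγ _
    have hηZ : η ∘ genericMatrix ι σ L i = can ∘ genericJacobian σ k d i := by
      ext s
      simp [η, genericMatrix]
    rw [map_comp_eulerProj, hηX, hηZ, eulerProj_eq_self]
    rw [← RingHom.map_dotProduct, dotProduct_genericJacobian, map_mul, hcan_form, mul_zero]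
  obtain ⟨θ, hθX, hθf, hθJ, hηθ⟩ := exists_ringHom_pderiv_genericForm_eq hd
    (IsUnit.of_mul_eq_one _ hyγ)
    (fun i => dotProduct_eulerProj (x := γ ∘ X) hyγ (genericMatrix ι σ L i))
    (fun i => (hηγ _).trans (hcan_form i))
    (fun i s => (congrFun (hη_proj i) s).trans (hηγ _).symm)
  refine ⟨θ, hθX, hθf, fun i => funext fun s => hθJ i s, fun p hp => ?_⟩
  have hη_minors : twoMinors (genericMatrix ι σ L) ≤ RingHom.ker η := by
    rw [twoMinors_le_ker_iff]
    simpa [η, genericMatrix] using hcan_minors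
  refine Ideal.mem_comap.mpr (Ideal.Quotient.eq_zero_iff_mem.mp ?_)
  calc can p = η (θ p) := (hηγ p).symm.trans congr($hηθ.symm p)
    _ = 0 := hη_minors hp

theorem exists_ringHom_ker_eq_inertiaForms (hd : ∀ i, 0 < d i) (j : σ)
    [Algebra (GenericRing σ k d) L] [IsLocalization.Away (X j : GenericRing σ k d) L] :
    ∃ Φ : GenericRing σ k d →+* MvPolynomial (ι ⊕ σ) L,
      (∀ s : σ, Φ (X s) = C (algebraMap (GenericRing σ k d) L (X s))) ∧
      RingHom.ker Φ = inertiaForms (Ideal.span {X j}) (jacobianIdeal σ k d) := by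
  let α := algebraMap (GenericRing σ k d) L
  have hunit : IsUnit (α (X j)) := IsLocalization.Away.algebraMap_isUnit _
  obtain ⟨y, hy⟩ := hunit.exists_right_inv
  obtain ⟨θ, hθX, hθf, hθJ, hθker⟩ := exists_ringHom_genericJacobian_eq hd hy
  let Φ : GenericRing σ k d →+* MvPolynomial (ι ⊕ σ) L := (segre ι σ L : _ →+* _).comp θ
  have hΦX (s : σ) : Φ (X s) = C (α (X s)) := by simp [Φ, hθX, segre]
  let β : σ → MvPolynomial (ι ⊕ σ) L :=
    eulerProj (fun s => C (α (X s))) j (C y) fun s => X (Sum.inr s)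
  have hΦJ (i : ι) : Φ ∘ genericJacobian σ k d i =
      (X (Sum.inl i) : MvPolynomial (ι ⊕ σ) L) • β := by
    rw [RingHom.coe_comp, Function.comp_assoc, hθJ, map_comp_eulerProj, RingHom.coe_coe,
      segre_comp_genericMatrix, eulerProj_smul]
    simp [β, Function.comp_def, α]
  have hle : jacobianIdeal σ k d ≤ RingHom.ker Φ := by
    refine jacobianIdeal_le_ker_iff.mpr ⟨fun i => by simp [Φ, hθf], fun i i' r s => ?_⟩
    have hΦJ' (i s) : Φ (genericJacobian σ k d i s) = X (Sum.inl i) * β s := congr($(hΦJ i) s)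
    rw [hΦJ', hΦJ', hΦJ', hΦJ']
    ring
  refine ⟨Φ, hΦX, le_antisymm (fun p hp => ?_) fun p hp => ?_⟩
  · have hp' : θ p ∈ twoMinors (genericMatrix ι σ L) := ker_segre.le hp
    obtain ⟨_, ⟨n, rfl⟩, hn⟩ := (IsLocalization.algebraMap_mem_map_algebraMap_iff
      (Submonoid.powers (X j)) L _ p).mp (hθker hp')
    exact mem_inertiaForms_span_singleton.mpr ⟨n, hn⟩
  · obtain ⟨n, hn⟩ := mem_inertiaForms_span_singleton.mp hp
    have hΦn : Φ (X j) ^ n * Φ p = 0 := by simpa using hle hn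
    have hΦunit : IsUnit (Φ (X j)) := hΦX j ▸ hunit.map C
    exact (hΦunit.pow n).mul_right_eq_zero.mp hΦn

end JacobianIdeal

theorem inertiaForms_isPrime_general {ι σ k : Type*} [Fintype σ] [DecidableEq σ] [Nonempty σ]
    [CommRing k] [IsDomain k] {d : ι → ℕ} (hd : ∀ i, 0 < d i) :
    (inertiaForms (Ideal.span (Set.range X)) (jacobianIdeal σ k d)).IsPrime := by
  let L (j : σ) := Localization.Away (X j : GenericRing σ k d)
  have hpowers (j : σ) : Submonoid.powers (X j) ≤ nonZeroDivisors (GenericRing σ k d) :=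
    powers_le_nonZeroDivisors_of_noZeroDivisors (X_ne_zero j)
  have hdomain (j : σ) : IsDomain (L j) := IsLocalization.isDomain_localization (hpowers j)
  choose Φ hΦX hΦker using fun j : σ =>
    exists_ringHom_ker_eq_inertiaForms (σ := σ) (k := k) (L := L j) hd j
  refine inertiaForms_span_range_isPrime (fun j => hΦker j ▸ RingHom.ker_isPrime (Φ j))
    fun j r => ?_
  have hinj : Function.Injective (algebraMap (GenericRing σ k d) (L j)) :=
    IsLocalization.injective _ (hpowers j)
  rw [← hΦker, RingHom.mem_ker, hΦX, map_eq_zero_iff _ (C_injective _ _), map_eq_zero_iff _ hinj]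
  exact X_ne_zero r

theorem Dideal_eq_jacobianIdeal (k : Type*) [CommRing k] (d : Fin 2 → ℕ) :
    Dideal k d = jacobianIdeal (Fin 4) k d := by
  rw [jacobianIdeal, twoMinors_fin_two, ← Ideal.span_union]
  have hrange : Set.range (genericForm (Fin 4) k d) =
      {genericForm (Fin 4) k d 0, genericForm (Fin 4) k d 1} := by
    ext
    simp [eq_comm]
  rw [hrange]
  rfl

end

/-- **Corollary.** If `k` is a domain then the ideal of inertia forms
`T_𝔪(𝒟) = {p : ∃ ν, 𝔪^ν·p ⊆ 𝒟}` is a prime ideal of `C`, and consequently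
`𝔓 = T_𝔪(𝒟) ∩ A` is a prime ideal of `A`. -/
theorem inertiaForms_isPrime (k : Type*) [CommRing k] [IsDomain k] (d : Fin 2 → ℕ)
    (hd : ∀ i, 0 < d i) (T : Ideal (Cring k d))
    (hT : (T : Set (Cring k d)) =
      {p : Cring k d | ∃ ν : ℕ, ∀ q ∈ (mIdeal k d) ^ ν, q * p ∈ Dideal k d}) :
    T.IsPrime ∧ (T.comap (algebraMap (Aring k d) (Cring k d))).IsPrime := by
  obtain rfl : T = inertiaForms (mIdeal k d) (Dideal k d) := SetLike.coe_injective hT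
  have hprime : (inertiaForms (mIdeal k d) (Dideal k d)).IsPrime :=
    Dideal_eq_jacobianIdeal k d ▸ inertiaForms_isPrime_general hd
  exact ⟨hprime, hprime.comap _⟩
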